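/- arXiv:1706.09246 — 2 statements merged into one kernel-verified Lean document; each statement's English description precedes it below -/
import Mathlib

section
/- Let n and b be natural numbers with n ≥ 2, b ≥ 2 and b not congruent to 1 modulo 3, and write s_i = (b+1)·b^(n+i) + 1. Then Ap(T_{b'}(n), s_0) = { t_1·s_1 + t_2·s_2 + ⋯ + t_(n+1)·s_(n+1) : (t_1,…,t_(n+1)) ∈ R_{b'}(n) }. -/
/-- The Thabit numerical semigroup of the second kind base `b`: the additive submonoid of ℕ
generated by `{(b+1)·b^(n+i) + 1 : i ∈ ℕ}`. -/
def thabitSemigroup2 (b n : ℕ) : AddSubmonoid ℕ :=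
  AddSubmonoid.closure {m : ℕ | ∃ i : ℕ, m = (b + 1) * b ^ (n + i) + 1}

/-- `R_{b'}(n)`: tuples `(t_1,…,t_(n+1))` with entries in `{0,…,b}` (encoded as functions
`ℕ → ℕ` supported on `{1,…,n+1}`) such that: if `t_i = b` then `t_j = 0` for all `j < i`;
`t_(n+1) ≤ b−1`; if `t_(n+1) = b−1` then `t_n ≤ b−1`; and if `t_n = t_(n+1) = b−1` then
`t_1 ≤ 2` and `t_i = 0` for every index `i ∉ {1, n, n+1}`. -/
def Rb' (b n : ℕ) (t : ℕ → ℕ) : Prop :=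
  (∀ j, t j ≤ b) ∧
  (∀ j, j ∉ Finset.Icc 1 (n + 1) → t j = 0) ∧
  (∀ i, t i = b → ∀ j < i, t j = 0) ∧
  t (n + 1) ≤ b - 1 ∧
  (t (n + 1) = b - 1 → t n ≤ b - 1) ∧
  (t n = b - 1 → t (n + 1) = b - 1 →
    t 1 ≤ 2 ∧ ∀ i, i ≠ 1 → i ≠ n → i ≠ n + 1 → t i = 0)

/-- Repunits in base `b`. -/
def rpu (b : ℕ) : ℕ → ℕ
  | 0 => 0
  | j + 1 => b * rpu b j + 1

/-- `Coin b k N L`: `N` is the sum of `L` repunits with indices `≤ k`. -/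
inductive Coin (b k : ℕ) : ℕ → ℕ → Prop
  | zero : Coin b k 0 0
  | add (j N L : ℕ) : j ≤ k → Coin b k N L → Coin b k (N + rpu b j) (L + 1)

theorem Coin.mono {b k k' N L : ℕ} (hk : k ≤ k') (h : Coin b k N L) : Coin b k' N L := by
  induction h with
  | zero => exact Coin.zero
  | add j N L hj _ ih => exact Coin.add j N L (hj.trans hk) ih

theorem Coin.add_many {b k N L : ℕ} (h : Coin b k N L) (j q : ℕ) (hj : j ≤ k) :
    Coin b k (N + q * rpu b j) (L + q) := by
  induction q with
  | zero => simpa using h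
  | succ q ih =>
    have := Coin.add j _ _ hj ih
    rw [show N + (q + 1) * rpu b j = N + q * rpu b j + rpu b j by ring]
    exact this

theorem Coin.decomp {b k N L : ℕ} (h : Coin b (k + 1) N L) :
    ∃ u N' L', Coin b k N' L' ∧ N = N' + u * rpu b (k + 1) ∧ L = L' + u := by
  induction h with
  | zero => exact ⟨0, 0, 0, Coin.zero, by simp, rfl⟩
  | add j N L hj _ ih =>
    obtain ⟨u, N', L', h, h1, h2⟩ := ih
    rcases Nat.lt_or_ge j (k + 1) with hlt | hge
    · exact ⟨u, N' + rpu b j, L' + 1, Coin.add j _ _ (by omega) h, by omega, by omega⟩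
    · have : j = k + 1 := by omega
      subst this
      exact ⟨u + 1, N', L', h, by rw [h1]; ring, by omega⟩

theorem Coin.zero_index {b N L : ℕ} (h : Coin b 0 N L) : N = 0 := by
  induction h with
  | zero => rfl
  | add j N L hj _ ih =>
    have : j = 0 := by omega
    subst this
    simp [ih, rpu]

theorem Coin.pos {b k N L : ℕ} (h : Coin b k N L) (hN : 1 ≤ N) :
    ∃ j N' L', j + 1 ≤ k ∧ Coin b k N' L' ∧ N = N' + rpu b (j + 1) ∧ L = L' + 1 := by
  induction h with
  | zero => omega
  | add j N L hj h ih =>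
    rcases j with _ | j
    · obtain ⟨i, N', L', hi, h', h1, h2⟩ := ih (by simpa [rpu] using hN)
      refine ⟨i, N', L' + 1, hi, ?_, ?_, by omega⟩
      · have := Coin.add 0 _ _ (Nat.zero_le k) h'
        simpa [rpu] using this
      · simpa [rpu] using h1
    · exact ⟨j, N, L, hj, h, rfl, rfl⟩

/-- Exchange property. -/
def Exch (b k : ℕ) : Prop :=
  ∀ M L, Coin b k (M + rpu b (k + 1)) L → ∃ L', L = L' + 1 ∧ Coin b k M L'

theorem exch_many {b k : ℕ} (h : Exch b k) (q : ℕ) :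
    ∀ M L, Coin b k (M + q * rpu b (k + 1)) L → ∃ L', L = L' + q ∧ Coin b k M L' := by
  induction q with
  | zero => intro M L hM; exact ⟨L, rfl, by simpa using hM⟩
  | succ q ih =>
    intro M L hM
    rw [show M + (q + 1) * rpu b (k + 1) = (M + q * rpu b (k + 1)) + rpu b (k + 1) by ring] at hM
    obtain ⟨L1, e1, h1⟩ := h _ _ hM
    obtain ⟨L2, e2, h2⟩ := ih _ _ h1
    exact ⟨L2, by omega, h2⟩

theorem drop_top {b k : ℕ} (h : Exch b k) (q M L : ℕ)
    (hM : Coin b (k + 1) (M + q * rpu b (k + 1)) L) :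
    ∃ L', L = L' + q ∧ Coin b (k + 1) M L' := by
  obtain ⟨u, N', L', h', e1, e2⟩ := hM.decomp
  rcases Nat.le_total q u with hq | hq
  · obtain ⟨d, rfl⟩ := Nat.exists_eq_add_of_le hq
    refine ⟨L' + d, by omega, ?_⟩
    have : M = N' + d * rpu b (k + 1) := by
      have : (q + d) * rpu b (k + 1) = q * rpu b (k + 1) + d * rpu b (k + 1) := by ring
      omega
    rw [this]
    exact (h'.mono (Nat.le_succ k)).add_many _ _ le_rfl
  · obtain ⟨d, rfl⟩ := Nat.exists_eq_add_of_le hq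
    have : N' = M + d * rpu b (k + 1) := by
      have : (u + d) * rpu b (k + 1) = u * rpu b (k + 1) + d * rpu b (k + 1) := by ring
      omega
    rw [this] at h'
    obtain ⟨L2, e, h2⟩ := exch_many h _ _ _ h'
    exact ⟨L2, by omega, h2.mono (Nat.le_succ k)⟩

theorem exch_all (b k : ℕ) : Exch b k := by
  induction k with
  | zero =>
    intro M L h
    have := h.zero_index
    simp [rpu] at this
  | succ k ih =>
    intro M L h
    have e : M + rpu b (k + 1 + 1) = (M + 1) + b * rpu b (k + 1) := by
      rw [rpu]; ring
    rw [e] at h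
    obtain ⟨L1, e1, h1⟩ := drop_top ih _ _ _ h
    obtain ⟨j, N', L', hj, h2, e2, e3⟩ := h1.pos (by omega)
    refine ⟨L' + b, by omega, ?_⟩
    have h3 := h2.add_many j b (by omega)
    have : M = N' + b * rpu b j := by
      rw [rpu] at e2; omega
    rw [this]; exact h3

/-- weight of a tuple -/
def wt (b : ℕ) (t : ℕ → ℕ) (k : ℕ) : ℕ := ∑ j ∈ Finset.Icc 1 k, t j * rpu b j

/-- length of a tuple -/
def len (t : ℕ → ℕ) (k : ℕ) : ℕ := ∑ j ∈ Finset.Icc 1 k, t j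

theorem wt_succ (b : ℕ) (t : ℕ → ℕ) (k : ℕ) :
    wt b t (k + 1) = wt b t k + t (k + 1) * rpu b (k + 1) := by
  unfold wt; rw [Finset.sum_Icc_succ_top (by omega)]

theorem len_succ (t : ℕ → ℕ) (k : ℕ) : len t (k + 1) = len t k + t (k + 1) := by
  unfold len; rw [Finset.sum_Icc_succ_top (by omega)]

theorem wt_zero (b : ℕ) (t : ℕ → ℕ) : wt b t 0 = 0 := by simp [wt]

theorem len_zero (t : ℕ → ℕ) : len t 0 = 0 := by simp [len]

/-- Greedy condition. -/
def Grd (b : ℕ) (t : ℕ → ℕ) : Prop :=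
  (∀ j, t j ≤ b) ∧ (∀ i, t i = b → ∀ j < i, t j = 0)

theorem rpu_pos (b k : ℕ) : 1 ≤ rpu b (k + 1) := by rw [rpu]; omega

theorem wt_lt {b : ℕ} (t : ℕ → ℕ) (h : Grd b t) (k : ℕ) : wt b t k < rpu b (k + 1) := by
  induction k with
  | zero => simp [wt_zero, rpu]
  | succ k ih =>
    have hr : rpu b (k + 1 + 1) = b * rpu b (k + 1) + 1 := rfl
    rw [wt_succ, hr]
    rcases (h.1 (k + 1)).lt_or_eq with hlt | heq
    · have : (t (k + 1) + 1) * rpu b (k + 1) ≤ b * rpu b (k + 1) := Nat.mul_le_mul_right _ hlt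
      rw [Nat.add_mul] at this
      omega
    · have h0 : wt b t k = 0 := by
        unfold wt
        apply Finset.sum_eq_zero
        intro j hj
        rw [Finset.mem_Icc] at hj
        rw [h.2 _ heq j (by omega), Nat.zero_mul]
      rw [h0, heq]; omega

theorem coin_wt (b : ℕ) (t : ℕ → ℕ) (k : ℕ) : Coin b k (wt b t k) (len t k) := by
  induction k with
  | zero => rw [wt_zero, len_zero]; exact Coin.zero
  | succ k ih =>
    rw [wt_succ, len_succ]
    exact (ih.mono (Nat.le_succ k)).add_many _ _ le_rfl

theorem len_min {b : ℕ} (t : ℕ → ℕ) (h : Grd b t) (k : ℕ) :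
    ∀ L, Coin b k (wt b t k) L → len t k ≤ L := by
  induction k with
  | zero => intro L _; rw [len_zero]; omega
  | succ k ih =>
    intro L hL
    rw [wt_succ] at hL
    obtain ⟨L1, e1, h1⟩ := drop_top (exch_all b k) _ _ _ hL
    obtain ⟨u, N', L', h2, e2, e3⟩ := h1.decomp
    have hlt := wt_lt t h k
    rcases u with _ | u
    · have : wt b t k = N' := by simpa using e2
      rw [← this] at h2
      have := ih _ h2
      rw [len_succ]; omega
    · rw [Nat.add_mul] at e2
      omega

theorem len_le_wt (b : ℕ) (t : ℕ → ℕ) (k : ℕ) : len t k ≤ wt b t k := by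
  unfold len wt
  apply Finset.sum_le_sum
  intro j hj
  rw [Finset.mem_Icc] at hj
  obtain ⟨i, rfl⟩ : ∃ i, j = i + 1 := ⟨j - 1, by omega⟩
  exact Nat.le_mul_of_pos_right _ (rpu_pos b i)

theorem single_le_wt (b : ℕ) (t : ℕ → ℕ) (k j : ℕ) (h1 : 1 ≤ j) (h2 : j ≤ k) :
    t j * rpu b j ≤ wt b t k :=
  Finset.single_le_sum (f := fun j => t j * rpu b j) (fun _ _ => Nat.zero_le _)
    (Finset.mem_Icc.2 ⟨h1, h2⟩)

theorem wt_congr {b : ℕ} {t t' : ℕ → ℕ} {k : ℕ} (h : ∀ j ≤ k, t j = t' j) :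
    wt b t k = wt b t' k := by
  unfold wt
  apply Finset.sum_congr rfl
  intro j hj
  rw [Finset.mem_Icc] at hj
  rw [h j hj.2]

theorem exists_greedy {b : ℕ} (hb : 2 ≤ b) (k : ℕ) : ∀ N, N < rpu b (k + 1) →
    ∃ t : ℕ → ℕ, Grd b t ∧ (∀ j, j ∉ Finset.Icc 1 k → t j = 0) ∧ wt b t k = N := by
  induction k with
  | zero =>
    intro N hN
    have : N = 0 := by simpa [rpu] using hN
    exact ⟨fun _ => 0, ⟨fun _ => by simp, fun i hi j _ => rfl⟩, fun _ _ => rfl,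
      by rw [wt_zero, this]⟩
  | succ k ih =>
    intro N hN
    have hp := rpu_pos b k
    have hmod := Nat.mod_lt N hp
    have hdiv := Nat.div_add_mod N (rpu b (k + 1))
    rw [rpu] at hN
    obtain ⟨t, hg, hs, hw⟩ := ih _ hmod
    have hq : N / rpu b (k + 1) ≤ b := by
      rw [Nat.div_le_iff_le_mul_add_pred hp, Nat.mul_comm]
      have := Nat.mul_comm b (rpu b (k + 1))
      omega
    refine ⟨Function.update t (k + 1) (N / rpu b (k + 1)), ⟨?_, ?_⟩, ?_, ?_⟩
    · intro j
      by_cases hj : j = k + 1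
      · subst hj; simpa using hq
      · simpa [Function.update_of_ne hj] using hg.1 j
    · intro i hi j hj
      by_cases hik : i = k + 1
      · subst hik
        rw [Function.update_self] at hi
        rw [Function.update_of_ne (by omega)]
        rw [hi, Nat.mul_comm] at hdiv
        have h0 : wt b t k = 0 := by omega
        by_cases hj1 : 1 ≤ j
        · have h1 := single_le_wt b t k j hj1 (by omega)
          obtain ⟨i, rfl⟩ : ∃ i, j = i + 1 := ⟨j - 1, by omega⟩
          have h2 := rpu_pos b i
          have h3 := Nat.le_mul_of_pos_right (t (i + 1)) h2
          omega
        · exact hs j (by simp; omega)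
      · rw [Function.update_of_ne hik] at hi
        have hik2 : i ≤ k := by
          by_contra hc
          have := hs i (by simp; omega)
          omega
        rw [Function.update_of_ne (by omega)]
        exact hg.2 i hi j hj
    · intro j hj
      rw [Finset.mem_Icc] at hj
      rw [Function.update_of_ne (by omega)]
      exact hs j (by rw [Finset.mem_Icc]; omega)
    · rw [wt_succ, Function.update_self]
      rw [wt_congr (t' := t) (fun j hj => Function.update_of_ne (by omega) _ _), hw,
        Nat.mul_comm]
      omega

theorem pow_rpu (a j : ℕ) : (a + 1) ^ j = a * rpu (a + 1) j + 1 := by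
  induction j with
  | zero => simp [rpu]
  | succ j ih => rw [pow_succ, ih, rpu]; ring

theorem K_eq (a n : ℕ) :
    (a + 1 + 1) * (a + 1) ^ n = a * rpu (a + 1) (n + 1) + a * rpu (a + 1) n + 2 := by
  have h1 := pow_rpu a n
  have h2 := pow_rpu a (n + 1)
  rw [pow_succ] at h2
  nlinarith

theorem rpu_ge3 (a j : ℕ) (ha : 1 ≤ a) : 3 ≤ rpu (a + 1) (j + 2) := by
  have := rpu_pos (a + 1) j
  rw [rpu]; nlinarith

theorem R_iff (a p : ℕ) (ha : 1 ≤ a) (t : ℕ → ℕ) :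
    Rb' (a + 1) (p + 2) t ↔ Grd (a + 1) t ∧ (∀ j, j ∉ Finset.Icc 1 (p + 2 + 1) → t j = 0) ∧
      wt (a + 1) t (p + 2 + 1) ≤ (a + 1 + 1) * (a + 1) ^ (p + 2) := by
  rw [K_eq, wt_succ, wt_succ]
  have h3 := rpu_ge3 a p ha
  have hr : rpu (a + 1) (p + 2 + 1) = (a + 1) * rpu (a + 1) (p + 2) + 1 := rfl
  unfold Rb'
  rw [Nat.add_sub_cancel]
  have e1 : p + 1 + 1 = p + 2 := rfl
  constructor
  · rintro ⟨h1, h2, h4, h5, h6, h7⟩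
    have hg : Grd (a + 1) t := ⟨h1, h4⟩
    refine ⟨hg, h2, ?_⟩
    have w1 := wt_lt t hg (p + 1)
    have w2 := wt_lt t hg (p + 1 + 1)
    rw [wt_succ] at w2
    rw [e1] at *
    rcases h5.lt_or_eq with hlt | heq
    · have : (t (p + 2 + 1) + 1) * rpu (a + 1) (p + 2 + 1) ≤ a * rpu (a + 1) (p + 2 + 1) :=
        Nat.mul_le_mul_right _ hlt
      rw [Nat.add_mul] at this
      omega
    · rcases (h6 heq).lt_or_eq with hlt | heq2
      · have : (t (p + 2) + 1) * rpu (a + 1) (p + 2) ≤ a * rpu (a + 1) (p + 2) :=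
          Nat.mul_le_mul_right _ hlt
        rw [Nat.add_mul] at this
        rw [heq]
        omega
      · obtain ⟨h8, h9⟩ := h7 heq2 heq
        have : wt (a + 1) t (p + 1) = t 1 := by
          unfold wt
          rw [Finset.sum_eq_single 1]
          · simp [rpu]
          · intro j hj hj1
            rw [Finset.mem_Icc] at hj
            rw [h9 j hj1 (by omega) (by omega), Nat.zero_mul]
          · intro h; simp at h
        rw [heq, heq2]
        omega
  · rintro ⟨hg, h2, hw⟩
    rw [e1] at *
    have h5 : t (p + 2 + 1) ≤ a := by
      by_contra hc
      have : (a + 1) * rpu (a + 1) (p + 2 + 1) ≤ t (p + 2 + 1) * rpu (a + 1) (p + 2 + 1) :=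
        Nat.mul_le_mul_right _ (by omega)
      rw [Nat.add_mul] at this hr
      omega
    have h6 : t (p + 2 + 1) = a → t (p + 2) ≤ a := by
      intro h
      by_contra hc
      have : (a + 1) * rpu (a + 1) (p + 2) ≤ t (p + 2) * rpu (a + 1) (p + 2) :=
        Nat.mul_le_mul_right _ (by omega)
      rw [Nat.add_mul] at this
      rw [h] at hw
      omega
    refine ⟨hg.1, h2, hg.2, h5, h6, ?_⟩
    intro k1 k2
    rw [k1, k2] at hw
    have hw2 : wt (a + 1) t (p + 1) ≤ 2 := by omega
    constructor
    · have := single_le_wt (a + 1) t (p + 1) 1 le_rfl (by omega)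
      simp [rpu] at this
      omega
    · intro i i1 i2 i3
      by_cases hi : i ∈ Finset.Icc 1 (p + 2 + 1)
      · rw [Finset.mem_Icc] at hi
        have := single_le_wt (a + 1) t (p + 1) i (by omega) (by omega)
        obtain ⟨l, rfl⟩ : ∃ l, i = l + 2 := ⟨i - 2, by omega⟩
        have h4 := rpu_ge3 a l ha
        by_contra hc
        have := Nat.le_mul_of_pos_left (rpu (a + 1) (l + 2)) (Nat.pos_of_ne_zero hc)
        omega
      · exact h2 i hi

theorem gen_eq (a n j : ℕ) : (a + 1 + 1) * (a + 1) ^ (n + j) + 1 =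
    a * ((a + 1 + 1) * (a + 1) ^ n) * rpu (a + 1) j + ((a + 1 + 1) * (a + 1) ^ n + 1) := by
  rw [pow_add, pow_rpu a j]; ring

theorem mem_iff (a n x : ℕ) : x ∈ thabitSemigroup2 (a + 1) n ↔
    ∃ k N L, Coin (a + 1) k N L ∧ x = a * ((a + 1 + 1) * (a + 1) ^ n) * N +
      ((a + 1 + 1) * (a + 1) ^ n + 1) * L := by
  constructor
  · intro h
    unfold thabitSemigroup2 at h
    induction h using AddSubmonoid.closure_induction_left with
    | zero => exact ⟨0, 0, 0, Coin.zero, by simp⟩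
    | add_left y hy z _ ih =>
      obtain ⟨i, rfl⟩ := hy
      obtain ⟨k, N, L, h, rfl⟩ := ih
      refine ⟨max k i, _, _, Coin.add i _ _ (le_max_right _ _) (h.mono (le_max_left _ _)), ?_⟩
      rw [gen_eq]; ring
  · rintro ⟨k, N, L, h, rfl⟩
    induction h with
    | zero => simp
    | add j N L hj _ ih =>
      have : (a + 1 + 1) * (a + 1) ^ (n + j) + 1 ∈ thabitSemigroup2 (a + 1) n :=
        AddSubmonoid.subset_closure ⟨j, rfl⟩
      have := add_mem ih this
      rw [gen_eq] at this
      convert this using 1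
      ring

theorem sum_eq (a n k : ℕ) (t : ℕ → ℕ) :
    ∑ j ∈ Finset.Icc 1 k, t j * ((a + 1 + 1) * (a + 1) ^ (n + j) + 1) =
    a * ((a + 1 + 1) * (a + 1) ^ n) * wt (a + 1) t k +
      ((a + 1 + 1) * (a + 1) ^ n + 1) * len t k := by
  unfold wt len
  rw [Finset.mul_sum, Finset.mul_sum, ← Finset.sum_add_distrib]
  apply Finset.sum_congr rfl
  intro j _
  rw [gen_eq]; ring

theorem coprime_aK (a n : ℕ) (h3 : (a + 1) % 3 ≠ 1) :
    Nat.Coprime ((a + 1 + 1) * (a + 1) ^ n + 1) (a * ((a + 1 + 1) * (a + 1) ^ n)) := by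
  apply Nat.Coprime.mul_right
  · rw [K_eq]
    have : a * rpu (a + 1) (n + 1) + a * rpu (a + 1) n + 2 + 1 =
      3 + a * (rpu (a + 1) (n + 1) + rpu (a + 1) n) := by ring
    rw [this, Nat.coprime_add_mul_left_left, Nat.Prime.coprime_iff_not_dvd Nat.prime_three]
    omega
  · simp

theorem thabit2_apery_set (n b : ℕ) (hn : 2 ≤ n) (hb : 2 ≤ b) (hb3 : b % 3 ≠ 1) :
    {s : ℕ | s ∈ thabitSemigroup2 b n ∧
        ¬ ∃ t ∈ thabitSemigroup2 b n, t + ((b + 1) * b ^ n + 1) = s}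
      = {x : ℕ | ∃ t : ℕ → ℕ, Rb' b n t ∧
          x = ∑ j ∈ Finset.Icc 1 (n + 1), t j * ((b + 1) * b ^ (n + j) + 1)} := by
  obtain ⟨a, rfl⟩ : ∃ a, b = a + 1 := ⟨b - 1, by omega⟩
  obtain ⟨p, rfl⟩ : ∃ p, n = p + 2 := ⟨n - 2, by omega⟩
  have ha : 1 ≤ a := by omega
  have hcop := coprime_aK a (p + 2) hb3
  have hK := K_eq a (p + 2)
  have hR := R_iff a p ha
  ext x
  simp only [Set.mem_setOf_eq, sum_eq, mem_iff, hR]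
  have hKr : (a + 1 + 1) * (a + 1) ^ (p + 2) < rpu (a + 1) (p + 2 + 1 + 1) := by
    have h3 := rpu_ge3 a p ha
    have hr : rpu (a + 1) (p + 2 + 1) = (a + 1) * rpu (a + 1) (p + 2) + 1 := rfl
    have hr2 : rpu (a + 1) (p + 2 + 1 + 1) = (a + 1) * rpu (a + 1) (p + 2 + 1) + 1 := rfl
    rw [hK, hr2, Nat.add_mul a 1 (rpu (a + 1) (p + 2 + 1))]
    rw [Nat.add_mul] at hr
    omega
  generalize (a + 1 + 1) * (a + 1) ^ (p + 2) = K at *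
  constructor
  · rintro ⟨⟨k, N, L, hc, rfl⟩, hno⟩
    have hmod : N % (K + 1) < K + 1 := Nat.mod_lt _ (by omega)
    have hdm := Nat.div_add_mod N (K + 1)
    obtain ⟨t, hg, hs, hw⟩ := exists_greedy hb (p + 2 + 1) (N % (K + 1)) (by omega)
    refine ⟨t, ⟨hg, hs, by omega⟩, ?_⟩
    rw [hw]
    have hlw := len_le_wt (a + 1) t (p + 2 + 1)
    set d := N / (K + 1) with hd
    set N0 := N % (K + 1) with hN0
    have hq : len t (p + 2 + 1) ≤ a * K * d + L := by
      rcases Nat.eq_zero_or_pos d with h0 | hpos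
      · rw [h0] at hdm
        have hNN : N = N0 := by omega
        have hext : ∀ k', p + 2 + 1 ≤ k' → wt (a + 1) t k' = N0 ∧ len t k' = len t (p + 2 + 1) := by
          intro k' hk'
          induction k', hk' using Nat.le_induction with
          | base => exact ⟨hw, rfl⟩
          | succ m hm ih =>
            have : t (m + 1) = 0 := hs _ (by rw [Finset.mem_Icc]; omega)
            rw [wt_succ, len_succ, this]
            simpa using ih
        have h1 := hext (max k (p + 2 + 1)) (le_max_right _ _)
        have h2 := len_min t hg (max k (p + 2 + 1)) L (by
          rw [h1.1, ← hNN]; exact hc.mono (le_max_left _ _))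
        omega
      · have : 1 * K * 1 ≤ a * K * d := by gcongr <;> omega
        omega
    obtain ⟨e, he⟩ := Nat.exists_eq_add_of_le hq
    have hx : a * K * N + (K + 1) * L =
        a * K * N0 + (K + 1) * len t (p + 2 + 1) + (K + 1) * e := by
      rw [← hdm]
      linear_combination (K + 1) * he
    rw [hx]
    rcases e with _ | e
    · simp
    · exfalso
      apply hno
      rw [hx]
      refine ⟨_, ⟨p + 2 + 1, N0, len t (p + 2 + 1) + e, ?_, rfl⟩, by ring⟩
      have h1 := coin_wt (a + 1) t (p + 2 + 1)
      rw [hw] at h1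
      simpa [rpu] using h1.add_many 0 e (Nat.zero_le _)
  · rintro ⟨t, ⟨hg, hs, hw⟩, rfl⟩
    refine ⟨⟨_, _, _, coin_wt (a + 1) t (p + 2 + 1), rfl⟩, ?_⟩
    rintro ⟨y, ⟨k, N, L, hc, rfl⟩, hy⟩
    have hlw := len_le_wt (a + 1) t (p + 2 + 1)
    set W := wt (a + 1) t (p + 2 + 1) with hW
    set l := len t (p + 2 + 1) with hl
    have hmodeq : N ≡ W [MOD (K + 1)] := by
      apply Nat.ModEq.cancel_left_of_coprime hcop
      have e : a * K * N + (K + 1) * (L + 1) = a * K * W + (K + 1) * l := by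
        rw [← hy]; ring
      have h1 : a * K * N + (K + 1) * (L + 1) ≡ a * K * N [MOD (K + 1)] := by
        simp [Nat.ModEq]
      have h2 : a * K * W + (K + 1) * l ≡ a * K * W [MOD (K + 1)] := by
        simp [Nat.ModEq]
      rw [e] at h1
      exact h1.symm.trans h2
    have hWm : N % (K + 1) = W := by
      rw [hmodeq]; exact Nat.mod_eq_of_lt (by omega)
    have hdm := Nat.div_add_mod N (K + 1)
    rw [hWm] at hdm
    set d := N / (K + 1) with hd
    have hlen : l = a * K * d + L + 1 := by
      apply Nat.eq_of_mul_eq_mul_left (show 0 < K + 1 by omega)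
      rw [← hdm] at hy
      linarith
    rcases Nat.eq_zero_or_pos d with h0 | hpos
    · rw [h0] at hdm hlen
      have hNN : N = W := by omega
      have hext : ∀ k', p + 2 + 1 ≤ k' → wt (a + 1) t k' = W ∧ len t k' = l := by
        intro k' hk'
        induction k', hk' using Nat.le_induction with
        | base => exact ⟨rfl, rfl⟩
        | succ m hm ih =>
          have : t (m + 1) = 0 := hs _ (by rw [Finset.mem_Icc]; omega)
          rw [wt_succ, len_succ, this]
          simpa using ih
      have h1 := hext (max k (p + 2 + 1)) (le_max_right _ _)
      have h2 := len_min t hg (max k (p + 2 + 1)) L (by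
        rw [h1.1, ← hNN]; exact hc.mono (le_max_left _ _))
      omega
    · have : 1 * K * 1 ≤ a * K * d := by gcongr <;> omega
      omega
end

section
/- Let n and b be natural numbers with n ≥ 2, b even and b ≥ 2. Then the genus of SC⁺(b,n), i.e., the cardinality of ℕ \ SC⁺(b,n), equals b + (b^(2n)·(b−1) + b^n·(b·n − n − 1))/2. -/
/-- The Cunningham numerical semigroup: the additive submonoid of ℕ generated by
`{b^(n+i) + 1 : i ∈ ℕ}`. -/
def cunninghamSemigroup (b n : ℕ) : AddSubmonoid ℕ :=
  AddSubmonoid.closure {m : ℕ | ∃ i : ℕ, m = b ^ (n + i) + 1}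

/-- `cunL b y` is the sum of `⌊y / b^j⌋` over `j ≥ 1`. -/
def cunL (b : ℕ) (y : ℕ) : ℕ :=
  if h : 2 ≤ b ∧ 0 < y then y / b + cunL b (y / b) else 0
termination_by y
decreasing_by exact Nat.div_lt_self h.2 h.1

lemma cunL_zero (b : ℕ) : cunL b 0 = 0 := by
  rw [cunL]; simp

lemma cunL_rec {b : ℕ} (hb : 2 ≤ b) (y : ℕ) : cunL b y = y / b + cunL b (y / b) := by
  rcases Nat.eq_zero_or_pos y with rfl | hy
  · simp [cunL_zero]
  · conv_lhs => rw [cunL]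
    simp [hb, hy]

lemma cunL_step {b : ℕ} (hb : 2 ≤ b) (x r : ℕ) (hr : r < b) :
    cunL b (b * x + r) = x + cunL b x := by
  have h : (b * x + r) / b = x := by
    rw [Nat.mul_add_div (by omega), Nat.div_eq_of_lt hr, add_zero]
  rw [cunL_rec hb, h]

lemma cunL_super {b : ℕ} (hb : 2 ≤ b) (x y : ℕ) :
    cunL b x + cunL b y ≤ cunL b (x + y) := by
  induction hs : x + y using Nat.strong_induction_on generalizing x y with
  | _ s ih =>
    rcases Nat.eq_zero_or_pos s with h0 | h0
    · have : x = 0 := by omega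
      have : y = 0 := by omega
      subst x y; simp [cunL_zero]
    · have hx := Nat.div_add_mod x b
      have hy := Nat.div_add_mod y b
      have hdiv : x / b + y / b ≤ s / b := by
        rw [← hs]; exact Nat.div_add_div_le_add_div
      have hlt : s / b < s := Nat.div_lt_self h0 hb
      have h1 := ih _ (lt_of_le_of_lt hdiv hlt) (x / b) (y / b) rfl
      have h2 := ih _ hlt (x / b + y / b) (s / b - (x / b + y / b)) (by omega)
      rw [cunL_rec hb x, cunL_rec hb y, cunL_rec hb s]
      omega

lemma cunL_mono {b : ℕ} (hb : 2 ≤ b) {x y : ℕ} (h : x ≤ y) : cunL b x ≤ cunL b y := by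
  have := cunL_super hb x (y - x)
  rw [Nat.add_sub_cancel' h] at this
  omega

lemma cunL_bound (c y : ℕ) (hc : 1 ≤ c) (hy : 0 < y) : c * cunL (c + 1) y + 1 ≤ y := by
  induction y using Nat.strong_induction_on with
  | _ y ih =>
    rw [cunL_rec (by omega)]
    have h := Nat.div_add_mod y (c + 1)
    set q := y / (c + 1) with hq
    rcases Nat.eq_zero_or_pos q with h0 | h0
    · rw [h0, cunL_zero]; omega
    · have := ih q (Nat.div_lt_self hy (by omega)) h0
      nlinarith [Nat.zero_le (y % (c + 1))]

lemma cunL_bound' (c y : ℕ) (hc : 1 ≤ c) : c * cunL (c + 1) y ≤ y := by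
  rcases Nat.eq_zero_or_pos y with rfl | h
  · simp [cunL_zero]
  · have := cunL_bound c y hc h; omega

lemma cunL_pow (c i : ℕ) (hc : 1 ≤ c) : c * cunL (c + 1) ((c + 1) ^ i) + 1 = (c + 1) ^ i := by
  induction i with
  | zero =>
    have := cunL_bound c 1 hc (by omega)
    simp only [pow_zero]; omega
  | succ i ih =>
    have := cunL_step (b := c + 1) (by omega) ((c + 1) ^ i) 0 (by omega)
    rw [add_zero, mul_comm, ← pow_succ] at this
    rw [this, pow_succ]
    nlinarith

lemma cun_mem_of (c : ℕ) (hc : 1 ≤ c) (y : ℕ) : ∀ n t x : ℕ, t ≤ cunL (c + 1) y →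
    x + c * t = ((c + 1) ^ n + 1) * y → x ∈ cunninghamSemigroup (c + 1) n := by
  induction y using Nat.strong_induction_on with
  | _ y ih =>
    intro n t x ht hx
    have g0 : (c + 1) ^ n + 1 ∈ cunninghamSemigroup (c + 1) n :=
      AddSubmonoid.subset_closure ⟨0, by simp⟩
    have g1 : (c + 1) ^ (n + 1) + 1 ∈ cunninghamSemigroup (c + 1) n :=
      AddSubmonoid.subset_closure ⟨1, rfl⟩
    have hdm := Nat.div_add_mod y (c + 1)
    have hrec := cunL_rec (b := c + 1) (by omega) y
    set q := y / (c + 1) with hq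
    set r := y % (c + 1) with hr
    clear_value q r
    rcases le_or_gt t q with htq | htq
    · obtain ⟨d, hd⟩ := Nat.exists_eq_add_of_le htq
      have : x = t * ((c + 1) ^ (n + 1) + 1) + ((c + 1) * d + r) * ((c + 1) ^ n + 1) := by
        have : x + c * t = t * ((c + 1) ^ (n + 1) + 1)
            + ((c + 1) * d + r) * ((c + 1) ^ n + 1) + c * t := by
          rw [hx, ← hdm, hd]; ring
        omega
      rw [this]
      exact add_mem (by simpa using nsmul_mem g1 t) (by simpa using nsmul_mem g0 ((c + 1) * d + r))
    · obtain ⟨t', rfl⟩ := Nat.exists_eq_add_of_le htq.le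
      have hy : 0 < y := by
        rcases Nat.eq_zero_or_pos y with h | h
        · rw [h, cunL_zero] at ht; omega
        · exact h
      have hqy : q < y := hq ▸ Nat.div_lt_self hy (by omega)
      have ht' : t' ≤ cunL (c + 1) q := by omega
      have hb := cunL_bound' c q hc
      have hb2 : c * t' ≤ q := le_trans (Nat.mul_le_mul_left c ht') hb
      obtain ⟨z, hz⟩ : ∃ z, z + c * t' = ((c + 1) ^ (n + 1) + 1) * q :=
        ⟨((c + 1) ^ (n + 1) + 1) * q - c * t', by
          apply Nat.sub_add_cancel; nlinarith [Nat.zero_le ((c + 1) ^ (n + 1) * q)]⟩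
      have hzm := ih q hqy (n + 1) t' z ht' hz
      have hle : cunninghamSemigroup (c + 1) (n + 1) ≤ cunninghamSemigroup (c + 1) n := by
        apply AddSubmonoid.closure_mono
        rintro _ ⟨i, rfl⟩
        exact ⟨1 + i, by rw [add_assoc]⟩
      have : x = z + r * ((c + 1) ^ n + 1) := by
        have h2 : x + c * (q + t') = z + r * ((c + 1) ^ n + 1) + c * (q + t') := by
          rw [hx, ← hdm]
          have : z + r * ((c + 1) ^ n + 1) + c * (q + t')
            = (z + c * t') + r * ((c + 1) ^ n + 1) + c * q := by ring
          rw [this, hz]; ring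
        omega
      rw [this]
      exact add_mem (hle hzm) (by simpa using nsmul_mem g0 r)

lemma cun_of_mem (c : ℕ) (hc : 1 ≤ c) (n x : ℕ) (hx : x ∈ cunninghamSemigroup (c + 1) n) :
    ∃ y t, t ≤ cunL (c + 1) y ∧ x + c * t = ((c + 1) ^ n + 1) * y := by
  induction hx using AddSubmonoid.closure_induction with
  | mem x h =>
    obtain ⟨i, rfl⟩ := h
    refine ⟨(c + 1) ^ i, _, le_rfl, ?_⟩
    have := cunL_pow c i hc
    rw [pow_add]
    nlinarith
  | zero => exact ⟨0, 0, by simp, by simp⟩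
  | add x y _ _ h1 h2 =>
    obtain ⟨y1, t1, h1, e1⟩ := h1
    obtain ⟨y2, t2, h2, e2⟩ := h2
    refine ⟨y1 + y2, t1 + t2, ?_, ?_⟩
    · have := cunL_super (b := c + 1) (by omega) y1 y2; omega
    · rw [mul_add, mul_add, ← e1, ← e2]; ring

lemma cunL_top (c n r : ℕ) (hc : 1 ≤ c) (hn : 1 ≤ n) (hr : r < c + 1) :
    cunL (c + 1) (c * (c + 1) ^ n + r) + 1 = (c + 1) ^ n := by
  have base : ∀ n, cunL (c + 1) (c * (c + 1) ^ n) + 1 = (c + 1) ^ n := by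
    intro n
    induction n with
    | zero =>
      have := cunL_step (b := c + 1) (by omega) 0 c (by omega)
      simp [cunL_zero] at this
      simp [this]
    | succ n ih =>
      have := cunL_step (b := c + 1) (by omega) (c * (c + 1) ^ n) 0 (by omega)
      have e : c * (c + 1) ^ (n + 1) = (c + 1) * (c * (c + 1) ^ n) + 0 := by ring
      rw [e, this, pow_succ]
      nlinarith
  obtain ⟨k, rfl⟩ := Nat.exists_eq_add_of_le' hn
  have e : c * (c + 1) ^ (k + 1) = (c + 1) * (c * (c + 1) ^ k) := by ring
  rw [e, cunL_step (by omega) _ _ hr, pow_succ]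
  have := base k
  nlinarith

lemma cunL_top' (c n : ℕ) (hc : 1 ≤ c) (hn : 2 ≤ n) :
    (c + 1) ^ n ≤ cunL (c + 1) (c * (c + 1) ^ n + (c + 1)) := by
  obtain ⟨k, rfl⟩ := Nat.exists_eq_add_of_le' (show 1 ≤ n by omega)
  have h := cunL_top c k 1 hc (by omega) (by omega)
  have e : c * (c + 1) ^ (k + 1) + (c + 1) = (c + 1) * (c * (c + 1) ^ k + 1) + 0 := by ring
  rw [e, cunL_step (by omega) _ _ (by omega), pow_succ]
  nlinarith

lemma cun_sum_block (c K : ℕ) (hc : 1 ≤ c) :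
    ∑ y ∈ Finset.range ((c + 1) * K), cunL (c + 1) y
      = (c + 1) * ∑ x ∈ Finset.range K, (x + cunL (c + 1) x) := by
  induction K with
  | zero => simp
  | succ K ih =>
    rw [mul_add, mul_one, Finset.sum_range_add, ih, Finset.sum_range_succ (n := K), mul_add (c + 1)]
    congr 1
    rw [Finset.sum_congr rfl (g := fun _ => K + cunL (c + 1) K)]
    · simp
    · intro r hr
      exact cunL_step (by omega) K r (Finset.mem_range.mp hr)

lemma cun_sum (c n : ℕ) (hc : 1 ≤ c) :
    (2 * ∑ y ∈ Finset.range (c * (c + 1) ^ n), (cunL (c + 1) y : ℤ))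
      = (c + 1) ^ n * c * ((c + 1) ^ n - 1 - n) := by
  induction n with
  | zero =>
    have : ∀ y ∈ Finset.range (c * (c + 1) ^ 0), (cunL (c + 1) y : ℤ) = 0 := by
      intro y hy
      have hy' : y < c := by simpa using hy
      have := cunL_step (b := c + 1) (by omega) 0 y (by omega)
      simp [cunL_zero] at this
      simp [this]
    rw [Finset.sum_eq_zero this]; simp
  | succ n ih =>
    have e : c * (c + 1) ^ (n + 1) = (c + 1) * (c * (c + 1) ^ n) := by ring
    have h := cun_sum_block c (c * (c + 1) ^ n) hc
    have h' : (∑ y ∈ Finset.range ((c + 1) * (c * (c + 1) ^ n)), (cunL (c + 1) y : ℤ))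
      = (c + 1) * ∑ x ∈ Finset.range (c * (c + 1) ^ n), ((x : ℤ) + cunL (c + 1) x) := by
      exact_mod_cast h
    have gs : ∀ N : ℕ, 2 * ∑ x ∈ Finset.range N, (x : ℤ) = N * (N - 1) := by
      intro N
      induction N with
      | zero => simp
      | succ N ih => rw [Finset.sum_range_succ, mul_add, ih]; push_cast; ring
    have g := gs (c * (c + 1) ^ n)
    rw [e, h', Finset.sum_add_distrib]
    push_cast at g ⊢
    linear_combination ((c : ℤ) + 1) * (ih + g)

/-- Pairs below the line. -/
lemma cun_triangle (c P : ℕ) (hc : 1 ≤ c) (hco : Nat.Coprime (P + 1) c) :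
    2 * ((Finset.range (c + 1) ×ˢ Finset.Icc 1 P).filter
      (fun p => (P + 1) * p.1 < c * p.2)).card = (c + 1) * P := by
  set R := Finset.range (c + 1) ×ˢ Finset.Icc 1 P with hR
  have hcard : R.card = (c + 1) * P := by simp [hR]
  have h1 := Finset.card_filter_add_card_filter_not (s := R) (fun p => (P + 1) * p.1 < c * p.2)
  have h2 : (R.filter (fun p => (P + 1) * p.1 < c * p.2)).card
      = (R.filter (fun p => ¬ (P + 1) * p.1 < c * p.2)).card := by
    apply Finset.card_bij' (fun p _ => (c - p.1, P + 1 - p.2)) (fun p _ => (c - p.1, P + 1 - p.2))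
    · rintro ⟨y, t⟩ h
      simp only [hR, Finset.mem_filter, Finset.mem_product, Finset.mem_range, Finset.mem_Icc] at h ⊢
      obtain ⟨⟨hy, ht1, ht2⟩, hlt⟩ := h
      refine ⟨by omega, ?_⟩
      obtain ⟨d, rfl⟩ := Nat.exists_eq_add_of_le (show y ≤ c by omega)
      obtain ⟨e, he⟩ := Nat.exists_eq_add_of_le (show t ≤ P + 1 by omega)
      rw [he] at hlt ⊢
      simp only [Nat.add_sub_cancel_left]
      nlinarith
    · rintro ⟨y, t⟩ h
      simp only [hR, Finset.mem_filter, Finset.mem_product, Finset.mem_range, Finset.mem_Icc] at h ⊢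
      obtain ⟨⟨hy, ht1, ht2⟩, hlt⟩ := h
      refine ⟨by omega, ?_⟩
      have hne : (P + 1) * y ≠ c * t := by
        intro heq
        have : (P + 1) ∣ t := hco.dvd_of_dvd_mul_left ⟨y, heq.symm⟩
        have := Nat.le_of_dvd (by omega) this
        omega
      have hgt : c * t < (P + 1) * y := by omega
      clear hne hlt hR h1 hcard
      obtain ⟨d, rfl⟩ := Nat.exists_eq_add_of_le (show y ≤ c by omega)
      obtain ⟨e, he⟩ := Nat.exists_eq_add_of_le (show t ≤ P + 1 by omega)
      rw [he] at hgt ⊢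
      simp only [Nat.add_sub_cancel_left]
      nlinarith
    · rintro ⟨y, t⟩ h
      simp only [hR, Finset.mem_filter, Finset.mem_product, Finset.mem_range, Finset.mem_Icc] at h
      ext <;> simp <;> omega
    · rintro ⟨y, t⟩ h
      simp only [hR, Finset.mem_filter, Finset.mem_product, Finset.mem_range, Finset.mem_Icc] at h
      ext <;> simp <;> omega
  omega

/-- If two representations of the same number, the `t`s are congruent. -/
lemma cun_rep (c m x y t y' t' : ℕ) (hm : 0 < m) (hco : Nat.Coprime m c) (h : x + c * t = m * y)
    (h' : x + c * t' = m * y') (htt : t ≤ t') : ∃ q, t' = t + m * q ∧ y' = y + c * q := by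
  obtain ⟨d, rfl⟩ := Nat.exists_eq_add_of_le htt
  have e : m * y' = m * y + c * d := by rw [← h, ← h']; ring
  have : m ∣ c * d := (Nat.dvd_add_right (Dvd.intro y rfl)).mp ⟨y', e.symm⟩
  obtain ⟨q, rfl⟩ := hco.dvd_of_dvd_mul_left this
  refine ⟨q, rfl, ?_⟩
  apply Nat.eq_of_mul_eq_mul_left hm
  rw [e]; ring

lemma cun_gaps (c n : ℕ) (hc : 1 ≤ c) (hn : 2 ≤ n) (hco : Nat.Coprime ((c + 1) ^ n + 1) c) :
    Set.ncard {x : ℕ | x ∉ cunninghamSemigroup (c + 1) n} =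
     ((Finset.range (c * (c + 1) ^ n + (c + 1)) ×ˢ Finset.Icc 1 ((c + 1) ^ n)).filter
      (fun p => cunL (c + 1) p.1 < p.2 ∧ ¬ ((c + 1) ^ n + 1) * p.1 < c * p.2)).card := by
  set P := (c + 1) ^ n with hP
  rw [← Set.ncard_coe_finset]
  symm
  apply Set.ncard_congr (fun p _ => (P + 1) * p.1 - c * p.2)
  · rintro ⟨y, t⟩ h
    simp only [Finset.coe_filter, Finset.mem_product, Finset.mem_range, Finset.mem_Icc,
      Set.mem_ofPred_eq] at h ⊢
    obtain ⟨⟨hy, ht1, ht2⟩, hL, hge⟩ := h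
    intro hmem
    obtain ⟨y', t', hL', e'⟩ := cun_of_mem c hc n _ hmem
    rw [← hP] at e'
    have e : (P + 1) * y - c * t + c * t = (P + 1) * y := Nat.sub_add_cancel (by omega)
    rcases le_total t t' with htt | htt
    · obtain ⟨q, rfl, rfl⟩ := cun_rep c (P + 1) _ y t y' t' (by omega) hco e e' htt
      rcases Nat.eq_zero_or_pos q with rfl | hq
      · simp at hL'; omega
      · have hb := cunL_bound' c (y + c * q) hc
        have h1 : c * (t + (P + 1) * q) ≤ y + c * q := le_trans (Nat.mul_le_mul_left c hL') hb
        have h2 : c * t + c * (P * q) ≤ y := by nlinarith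
        have h3 : t ≤ c * (P * q) := by
          have : P * 1 ≤ P * q := Nat.mul_le_mul_left P hq
          nlinarith
        have h4 : (c + 1) * t + 0 ≤ y := by nlinarith
        have h5 := cunL_mono (b := c + 1) (by omega) h4
        rw [cunL_step (by omega) _ _ (by omega)] at h5
        omega
    · obtain ⟨q, h1, h2⟩ := cun_rep c (P + 1) _ y' t' y t (by omega) hco e' e htt
      rcases Nat.eq_zero_or_pos q with rfl | hq
      · simp at h1 h2; subst h1 h2; omega
      · have : (P + 1) * 1 ≤ (P + 1) * q := Nat.mul_le_mul_left _ hq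
        omega
  · rintro ⟨y, t⟩ ⟨y', t'⟩ h h' heq
    simp only [Finset.coe_filter, Finset.mem_product, Finset.mem_range, Finset.mem_Icc,
      Set.mem_ofPred_eq] at h h' heq
    obtain ⟨⟨hy, ht1, ht2⟩, hL, hge⟩ := h
    obtain ⟨⟨hy', ht1', ht2'⟩, hL', hge'⟩ := h'
    have e : (P + 1) * y - c * t + c * t = (P + 1) * y := Nat.sub_add_cancel (by omega)
    have e' : (P + 1) * y' - c * t' + c * t' = (P + 1) * y' := Nat.sub_add_cancel (by omega)
    rw [← heq] at e'
    rcases le_total t t' with htt | htt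
    · obtain ⟨q, h1, h2⟩ := cun_rep c (P + 1) _ y t y' t' (by omega) hco e e' htt
      rcases Nat.eq_zero_or_pos q with rfl | hq
      · simp at h1 h2; rw [h1, h2]
      · have : (P + 1) * 1 ≤ (P + 1) * q := Nat.mul_le_mul_left _ hq
        omega
    · obtain ⟨q, h1, h2⟩ := cun_rep c (P + 1) _ y' t' y t (by omega) hco e' e htt
      rcases Nat.eq_zero_or_pos q with rfl | hq
      · simp at h1 h2; rw [h1, h2]
      · have : (P + 1) * 1 ≤ (P + 1) * q := Nat.mul_le_mul_left _ hq
        omega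
  · intro x hx
    simp only [Set.mem_ofPred_eq] at hx
    obtain ⟨t, ht, y, e⟩ : ∃ t, t < P + 1 ∧ ∃ y, x + c * t = (P + 1) * y := by
      have : NeZero (P + 1) := ⟨by omega⟩
      have hu : (c : ZMod (P + 1)) * (c : ZMod (P + 1))⁻¹ = 1 :=
        ZMod.coe_mul_inv_eq_one c hco.symm
      refine ⟨(-(x : ZMod (P + 1)) * (c : ZMod (P + 1))⁻¹).val, ZMod.val_lt _, ?_⟩
      change (P + 1) ∣ _
      rw [← ZMod.natCast_eq_zero_iff]
      rw [Nat.cast_add, Nat.cast_mul, ZMod.natCast_zmod_val]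
      linear_combination (-(x : ZMod (P + 1))) * hu
    have hL : cunL (c + 1) y < t := by
      by_contra hcon
      exact hx (cun_mem_of c hc y n t x (by omega) e)
    have hy : y < c * P + (c + 1) := by
      by_contra hcon
      have h1 := cunL_mono (b := c + 1) (by omega) (not_lt.mp hcon)
      have h2 := cunL_top' c n hc hn
      rw [← hP] at h2
      omega
    refine ⟨(y, t), ?_, ?_⟩
    · simp only [Finset.coe_filter, Finset.mem_product, Finset.mem_range, Finset.mem_Icc,
        Set.mem_ofPred_eq]
      refine ⟨by omega, hL, by omega⟩
    · simp only; omega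

theorem cunningham_genus (n b : ℕ) (hn : 2 ≤ n) (hb : 2 ≤ b) (hbe : Even b) :
    2 * Set.ncard {m : ℕ | m ∉ cunninghamSemigroup b n}
      = 2 * b + b ^ (2 * n) * (b - 1) + b ^ n * (b * n - n - 1) := by
  obtain ⟨c, rfl⟩ := Nat.exists_eq_add_of_le' (show 1 ≤ b by omega)
  have hc : 1 ≤ c := by omega
  have hco : Nat.Coprime ((c + 1) ^ n + 1) c := by
    have h1 : (c + 1) ^ n + 1 ≡ 2 [MOD c] := by
      have : (c + 1) ≡ 1 [MOD c] := by simp [Nat.ModEq]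
      simpa using (this.pow n).add_right 1
    have hodd : Nat.Coprime 2 c := by
      rw [Nat.coprime_two_left]
      by_contra hcon
      rw [Nat.not_odd_iff_even] at hcon
      rw [Nat.even_add_one] at hbe
      exact hbe hcon
    unfold Nat.Coprime at hodd ⊢
    rw [h1.gcd_eq, hodd]
  rw [cun_gaps c n hc hn hco]
  have hsum := cun_sum c n hc
  have htop : ∀ r, r < c + 1 → cunL (c + 1) (c * (c + 1) ^ n + r) + 1 = (c + 1) ^ n :=
    fun r hr => cunL_top c n r hc (by omega) hr
  have htri := cun_triangle c ((c + 1) ^ n) hc hco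
  have hpow : (c + 1) ^ (2 * n) = (c + 1) ^ n * (c + 1) ^ n := by rw [two_mul, pow_add]
  have hPpos : 1 ≤ (c + 1) ^ n := Nat.one_le_pow _ _ (by omega)
  rw [hpow]
  have hcast : ((c : ℤ) + 1) ^ n = (((c + 1) ^ n : ℕ) : ℤ) := by push_cast; rfl
  rw [hcast] at hsum
  clear hcast
  generalize (c + 1) ^ n = P at *
  set Q := Finset.range (c * P + (c + 1)) ×ˢ Finset.Icc 1 P with hQ
  -- total count
  have htot : (Q.filter (fun p => cunL (c + 1) p.1 < p.2)).card
      = ∑ y ∈ Finset.range (c * P + (c + 1)), (P - cunL (c + 1) y) := by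
    rw [hQ, Finset.card_filter, Finset.sum_product]
    apply Finset.sum_congr rfl
    intro y _
    rw [← Finset.card_filter]
    have : (Finset.Icc 1 P).filter (fun t => cunL (c + 1) y < t)
        = Finset.Ioc (cunL (c + 1) y) P := by
      ext t; simp only [Finset.mem_filter, Finset.mem_Icc, Finset.mem_Ioc]; omega
    rw [this, Nat.card_Ioc]
  have hsplit := Finset.card_filter_add_card_filter_not
    (s := Q.filter (fun p => cunL (c + 1) p.1 < p.2)) (fun p => (P + 1) * p.1 < c * p.2)
  rw [Finset.filter_filter, Finset.filter_filter] at hsplit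
  have hT : Q.filter (fun p => cunL (c + 1) p.1 < p.2 ∧ (P + 1) * p.1 < c * p.2)
      = (Finset.range (c + 1) ×ˢ Finset.Icc 1 P).filter (fun p => (P + 1) * p.1 < c * p.2) := by
    ext ⟨y, t⟩
    simp only [hQ, Finset.mem_filter, Finset.mem_product, Finset.mem_range, Finset.mem_Icc]
    constructor
    · rintro ⟨⟨_, h1, h2⟩, _, h3⟩
      refine ⟨⟨?_, h1, h2⟩, h3⟩
      by_contra hcon
      have : c + 1 ≤ y := by omega
      nlinarith
    · rintro ⟨⟨h0, h1, h2⟩, h3⟩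
      refine ⟨⟨by omega, h1, h2⟩, ?_, h3⟩
      have hbd := cunL_bound' c y hc
      have : y < c * t := by nlinarith
      exact lt_of_mul_lt_mul_left (lt_of_le_of_lt hbd this) (Nat.zero_le c)
  rw [hT, htot] at hsplit
  have hS : ((∑ y ∈ Finset.range (c * P + (c + 1)), (P - cunL (c + 1) y) : ℕ) : ℤ)
      = c * P * P - ∑ y ∈ Finset.range (c * P), (cunL (c + 1) y : ℤ) + (c + 1) := by
    rw [Finset.sum_range_add, Nat.cast_add]
    have e1 : ∑ r ∈ Finset.range (c + 1), (P - cunL (c + 1) (c * P + r)) = c + 1 := by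
      rw [Finset.sum_congr rfl (g := fun _ => 1)]
      · simp
      · intro r hr
        have := htop r (Finset.mem_range.mp hr)
        omega
    rw [e1, Nat.cast_sum]
    rw [Finset.sum_congr rfl (g := fun y => (P : ℤ) - (cunL (c + 1) y : ℤ))]
    · rw [Finset.sum_sub_distrib]; simp
    · intro y hy
      have h0 := htop 0 (by omega)
      have h1 := cunL_mono (b := c + 1) (by omega)
        (show y ≤ c * P + 0 by have := Finset.mem_range.mp hy; omega)
      rw [Nat.cast_sub (by omega)]
  have hk : (c + 1) * n - n - 1 + 1 = c * n := by
    have : (c + 1) * n = c * n + n := by ring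
    have : 1 ≤ c * n := Nat.mul_pos hc (by omega)
    omega
  generalize (c + 1) * n - n - 1 = k at *
  rw [Nat.add_sub_cancel]
  zify at hsplit htri hk ⊢
  push_cast at hS
  rw [hS] at hsplit
  have hk' : (k : ℤ) = c * n - 1 := by linarith
  rw [hk']
  linear_combination 2 * hsplit - htri - hsum
end
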